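/- Let P be a finite bounded poset. Then A** = A for all antichains A in P if and only if P satisfies both: (i) for all x, y ∈ P, if Λ(x) ⊆ Λ(y) then x ≤ y; and (ii) for every x ∈ P there exists y ∈ P such that Λ \ Λ(x) = Λ(y). -/

import Mathlib

/-- The blocker of a set `A` in a poset with bottom element: the minimal elements among
those having a common atom with every member of `A`. -/
def blocker {P : Type*} [PartialOrder P] [OrderBot P] (A : Set P) : Set P :=
  {x | (∀ a ∈ A, ∃ l : P, IsAtom l ∧ l ≤ x ∧ l ≤ a) ∧
    ∀ y : P, (∀ a ∈ A, ∃ l : P, IsAtom l ∧ l ≤ y ∧ l ≤ a) → y ≤ x → y = x}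

/-- An antichain in a poset with bottom element, in the sense of Björner–Hultman:
a nonempty set avoiding `⊥` whose elements are pairwise incomparable. -/
def IsAnti {P : Type*} [PartialOrder P] [OrderBot P] (A : Set P) : Prop :=
  A.Nonempty ∧ ⊥ ∉ A ∧ IsAntichain (· ≤ ·) A

/-- `Λ(x)`, the set of atoms below `x`. -/
def atomsBelow {P : Type*} [PartialOrder P] [OrderBot P] (x : P) : Set P :=
  {l | IsAtom l ∧ l ≤ x}

/-!
Write `T A` for the set of elements sharing an atom with every member of `A`, so that `blocker A`
consists of the minimal elements of `T A`. Since `T A` is an upper set, when minimal elements exist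
it can be recovered from the blocker, and `A** = A` becomes `T (T A) = U`, where `U` is the upper
closure of `A`. In this form minimal elements have disappeared: condition (i) is read off from the
equation at singletons and condition (ii) from the equation at the antichain of atoms not below
`x`; conversely, an element `z` above no member of `A` is excluded from `T (T A)` by its atomic
complement, which lies in `T A`.
-/

open Set

section AtomTransversals

variable {P : Type*} [PartialOrder P] [OrderBot P] {A : Set P} {x y a : P}

lemma atomsBelow_mono : Monotone (atomsBelow : P → Set P) :=
  fun _ _ hxy _ hl => ⟨hl.1, hl.2.trans hxy⟩

lemma atomsBelow_bot : atomsBelow (⊥ : P) = ∅ :=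
  eq_empty_of_forall_notMem fun _ hl => hl.1.ne_bot (le_bot_iff.1 hl.2)

lemma atomsBelow_eq_singleton (ha : IsAtom a) : atomsBelow a = {a} := by
  ext l
  exact ⟨fun hl => (ha.le_iff_eq hl.1.ne_bot).1 hl.2, by rintro rfl; exact ⟨ha, le_rfl⟩⟩

lemma isAntichain_isAtom : IsAntichain (· ≤ ·) {a : P | IsAtom a} :=
  fun _ ha _ hb hne hle => hne ((hb.le_iff_eq ha.ne_bot).1 hle)

/-- The elements having a common atom with every member of `A`; the blocker of `A` consists of
the minimal ones. -/
def atomTransversals (A : Set P) : Set P :=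
  {x | ∀ a ∈ A, (atomsBelow x ∩ atomsBelow a).Nonempty}

lemma notMem_atomTransversals_iff :
    x ∉ atomTransversals A ↔ ∃ a ∈ A, Disjoint (atomsBelow x) (atomsBelow a) := by
  simp only [atomTransversals, mem_ofPred_eq, not_forall, exists_prop,
    not_nonempty_iff_eq_empty, disjoint_iff_inter_eq_empty]

lemma isUpperSet_atomTransversals (A : Set P) : IsUpperSet (atomTransversals A) :=
  fun _ _ hxy hx a ha => (hx a ha).mono (inter_subset_inter_left _ (atomsBelow_mono hxy))

lemma atomTransversals_upperClosure (A : Set P) :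
    atomTransversals (upperClosure A : Set P) = atomTransversals A := by
  refine Subset.antisymm (fun x hx a ha => hx a (subset_upperClosure ha)) ?_
  rintro x hx b ⟨a, ha, hab⟩
  exact (hx a ha).mono (inter_subset_inter_right _ (atomsBelow_mono hab))

lemma upperClosure_subset_atomTransversals_atomTransversals (A : Set P) :
    (upperClosure A : Set P) ⊆ atomTransversals (atomTransversals A) :=
  upperClosure_min (fun a ha u hu => inter_comm (atomsBelow u) _ ▸ hu a ha)
    (isUpperSet_atomTransversals _)

lemma atomTransversals_empty : atomTransversals (∅ : Set P) = univ :=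
  eq_univ_of_forall fun _ _ ha => ha.elim

lemma atomTransversals_eq_empty_of_bot_mem (h : ⊥ ∈ A) : atomTransversals A = ∅ :=
  eq_empty_of_forall_notMem fun _ =>
    notMem_atomTransversals_iff.2 ⟨⊥, h, by rw [atomsBelow_bot]; exact disjoint_empty _⟩

lemma subset_atomsBelow_of_mem_atomTransversals (hA : ∀ a ∈ A, IsAtom a)
    (hx : x ∈ atomTransversals A) : A ⊆ atomsBelow x := by
  intro a ha
  have hmeet := hx a ha
  rwa [atomsBelow_eq_singleton (hA a ha), inter_singleton_nonempty] at hmeet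

lemma le_of_atomsBelow_subset
    (hx : atomTransversals (atomTransversals {x}) = (upperClosure {x} : Set P))
    (hxy : atomsBelow x ⊆ atomsBelow y) : x ≤ y := by
  have hy : y ∈ atomTransversals (atomTransversals {x}) := fun u hu =>
    (hu x rfl).mono fun _ hl => ⟨hxy hl.2, hl.1⟩
  rw [hx, upperClosure_singleton] at hy
  exact hy

lemma exists_atomsBelow_eq_sdiff
    (hx : atomTransversals (atomTransversals ({l : P | IsAtom l} \ atomsBelow x)) =
      (upperClosure ({l : P | IsAtom l} \ atomsBelow x) : Set P)) :
    ∃ y : P, {l : P | IsAtom l} \ atomsBelow x = atomsBelow y := by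
  have hx_notMem : x ∉ atomTransversals (atomTransversals ({l : P | IsAtom l} \ atomsBelow x)) := by
    rw [hx]
    rintro ⟨a, ha, hax⟩
    exact ha.2 ⟨ha.1, hax⟩
  obtain ⟨y, hy, hdisj⟩ := notMem_atomTransversals_iff.1 hx_notMem
  refine ⟨y, Subset.antisymm (subset_atomsBelow_of_mem_atomTransversals (fun _ ha => ha.1) hy) ?_⟩
  exact fun l hl => ⟨hl.1, hdisj.notMem_of_mem_right hl⟩

lemma atomTransversals_atomTransversals_eq_upperClosure
    (hle : ∀ x y : P, atomsBelow x ⊆ atomsBelow y → x ≤ y)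
    (hcompl : ∀ x : P, ∃ y : P, {l : P | IsAtom l} \ atomsBelow x = atomsBelow y) (A : Set P) :
    atomTransversals (atomTransversals A) = (upperClosure A : Set P) := by
  refine Subset.antisymm (fun z hz => ?_)
    (upperClosure_subset_atomTransversals_atomTransversals A)
  by_contra hzA
  obtain ⟨y, hy⟩ := hcompl z
  have hyA : y ∈ atomTransversals A := by
    intro a ha
    have haz : ¬ atomsBelow a ⊆ atomsBelow z := fun h => hzA ⟨a, ha, hle a z h⟩
    obtain ⟨l, hla, hlz⟩ := not_subset.1 haz
    exact ⟨l, hy ▸ ⟨hla.1, hlz⟩, hla⟩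
  have hdisj : Disjoint (atomsBelow z) (atomsBelow y) := hy ▸ disjoint_sdiff_right
  exact notMem_atomTransversals_iff.2 ⟨y, hyA, hdisj⟩ hz

theorem forall_atomTransversals_atomTransversals_eq_upperClosure_iff :
    (∀ A : Set P, IsAntichain (· ≤ ·) A →
        atomTransversals (atomTransversals A) = (upperClosure A : Set P)) ↔
      ((∀ x y : P, atomsBelow x ⊆ atomsBelow y → x ≤ y) ∧
        (∀ x : P, ∃ y : P, {l : P | IsAtom l} \ atomsBelow x = atomsBelow y)) :=
  ⟨fun h => ⟨fun x _ => le_of_atomsBelow_subset (h {x} IsAntichain.singleton),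
      fun _ => exists_atomsBelow_eq_sdiff (h _ (isAntichain_isAtom.subset sdiff_subset))⟩,
    fun h A _ => atomTransversals_atomTransversals_eq_upperClosure h.1 h.2 A⟩

end AtomTransversals

section Blocker

variable {P : Type*} [PartialOrder P] [OrderBot P]

lemma mem_blocker_iff_minimal {A : Set P} {x : P} :
    x ∈ blocker A ↔ Minimal (· ∈ atomTransversals A) x := by
  have hmem : ∀ z, z ∈ atomTransversals A ↔ ∀ a ∈ A, ∃ l, IsAtom l ∧ l ≤ z ∧ l ≤ a := fun z =>
    forall₂_congr fun _ _ => exists_congr fun _ => and_and_left.symm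
  simp only [minimal_iff, hmem, blocker, mem_ofPred_eq, eq_comm]

variable [WellFoundedLT P]

lemma upperClosure_blocker (A : Set P) :
    (upperClosure (blocker A) : Set P) = atomTransversals A := by
  refine Subset.antisymm (upperClosure_min (fun _ hb => (mem_blocker_iff_minimal.1 hb).prop)
    (isUpperSet_atomTransversals A)) fun x hx => ?_
  obtain ⟨b, hbx, hb⟩ := exists_minimal_le_of_wellFoundedLT (· ∈ atomTransversals A) x hx
  exact ⟨b, mem_blocker_iff_minimal.2 hb, hbx⟩

lemma atomTransversals_blocker (A : Set P) :
    atomTransversals (blocker A) = atomTransversals (atomTransversals A) := by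
  rw [← atomTransversals_upperClosure, upperClosure_blocker]

lemma blocker_blocker_eq_self_iff {A : Set P} (hA : IsAntichain (· ≤ ·) A) :
    blocker (blocker A) = A ↔
      atomTransversals (atomTransversals A) = (upperClosure A : Set P) := by
  rw [← atomTransversals_blocker]
  constructor
  · intro h
    rw [← upperClosure_blocker, h]
  · intro h
    ext x
    rw [mem_blocker_iff_minimal, h]
    exact hA.minimal_mem_upperClosure_iff_mem

lemma forall_isAnti_blocker_blocker_eq_self_iff :
    (∀ A : Set P, IsAnti A → blocker (blocker A) = A) ↔
      ∀ A : Set P, IsAntichain (· ≤ ·) A →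
        atomTransversals (atomTransversals A) = (upperClosure A : Set P) := by
  refine ⟨fun h A hA => ?_, fun h A hA => (blocker_blocker_eq_self_iff hA.2.2).2 (h A hA.2.2)⟩
  rcases A.eq_empty_or_nonempty with rfl | hne
  · rw [atomTransversals_empty, atomTransversals_eq_empty_of_bot_mem (mem_univ ⊥),
      upperClosure_empty, UpperSet.coe_top]
  by_cases hbot : ⊥ ∈ A
  · rw [atomTransversals_eq_empty_of_bot_mem hbot, atomTransversals_empty]
    exact (eq_univ_of_forall fun x => mem_upperClosure.2 ⟨⊥, hbot, bot_le⟩).symm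
  · exact (blocker_blocker_eq_self_iff hA).1 (h A ⟨hne, hbot, hA⟩)

theorem strong_blocker_duality_iff_general :
    (∀ A : Set P, IsAnti A → blocker (blocker A) = A) ↔
      ((∀ x y : P, atomsBelow x ⊆ atomsBelow y → x ≤ y) ∧
        (∀ x : P, ∃ y : P, {l : P | IsAtom l} \ atomsBelow x = atomsBelow y)) :=
  forall_isAnti_blocker_blocker_eq_self_iff.trans
    forall_atomTransversals_atomTransversals_eq_upperClosure_iff

end Blocker

/-- Theorem 2.4, (1) ⇔ (3): a finite bounded poset satisfies `A** = A` for all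
antichains `A` if and only if (i) `Λ(x) ⊆ Λ(y)` implies `x ≤ y`, and (ii) for every
`x` there is `y` with `Λ \ Λ(x) = Λ(y)`. -/
theorem strong_blocker_duality_iff {P : Type*} [PartialOrder P] [BoundedOrder P] [Fintype P] :
    (∀ A : Set P, IsAnti A → blocker (blocker A) = A) ↔
      ((∀ x y : P, atomsBelow x ⊆ atomsBelow y → x ≤ y) ∧
        (∀ x : P, ∃ y : P, {l : P | IsAtom l} \ atomsBelow x = atomsBelow y)) :=
  strong_blocker_duality_iff_general
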